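/- For every τ in the complex upper half-plane ℍ, one has (q·d/dq) h(τ) = −E_odd(τ)·(h(τ)² − 64). -/

import Mathlib

noncomputable section
open Complex Real

/-- `q = e^{2πiτ}`. -/
def nome (τ : ℂ) : ℂ := Complex.exp (2 * (π : ℂ) * I * τ)

/-- Dedekind eta function `η(τ) = e^{πiτ/12} ∏_{n≥1} (1 − qⁿ)`. -/
def dedekindEta (τ : ℂ) : ℂ :=
  Complex.exp ((π : ℂ) * I * τ / 12) * ∏' n : ℕ, (1 - nome τ ^ (n + 1))

/-- Sum of the positive odd divisors of `n`. -/
def sigmaOdd (n : ℕ) : ℕ := ∑ d ∈ n.divisors.filter (fun d => Odd d), d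

/-- `E*(τ) = 1 + 24 Σ_{n≥1} σ_odd(n) qⁿ`. -/
def Estar (τ : ℂ) : ℂ := 1 + 24 * ∑' n : ℕ, (sigmaOdd (n + 1) : ℂ) * nome τ ^ (n + 1)

/-- `E_odd(τ) = Σ_{n≥0} σ₁(2n+1) q^{2n+1}`. -/
def Eodd (τ : ℂ) : ℂ :=
  ∑' n : ℕ, ((∑ d ∈ (2 * n + 1).divisors, d : ℕ) : ℂ) * nome τ ^ (2 * n + 1)

/-- `h(τ) = (η(2τ)⁴/η(4τ)⁸)·E*(2τ)`. -/
def hfun (τ : ℂ) : ℂ := dedekindEta (2 * τ) ^ 4 / dedekindEta (4 * τ) ^ 8 * Estar (2 * τ)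

/-!
The three matrices of determinant `2` modulo `SL(2, ℤ)` turn `E₂` into `E₂ + eᵢ`, and `SL(2, ℤ)`
permutes the forms `e₁, e₂, e₃` of weight `2`. With `ϑ` the Serre derivative, the forms
`ϑ eᵢ + eᵢ² / 3 - (e₁² + e₂² + e₃²) / 9` are permuted as well and vanish at `i∞`. Their sum and
their sum of squares are level one cusp forms of weight less than `12`, hence zero; so two of them
have a difference proportional to the third. As `T` swaps these two and fixes the third, they
coincide; then `S` makes all three equal, hence zero. For `A = e₁` and `u = (e₃ - e₂) / 24` this
reads `ϑ A = -A² / 6 + 32 u²` and `ϑ u = A u / 3`, so that `A / u` has derivative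
`-(u / 2) ((A / u)² - 64)`. Comparison of `q`-expansions gives `A = E*` and `u(2τ) = E_odd(τ)`, and
`u(τ) = η(2τ)⁸ / η(τ)⁴` because both sides solve the same first order equation `ϑ F = A F / 3` and
agree to leading order at `i∞`; thus `h(τ) = (A / u)(2τ)`.
-/

open UpperHalfPlane hiding I
open Filter Topology Function.Periodic EisensteinSeries Derivative
open scoped Manifold MatrixGroups ModularForm

/-! ### Derivatives and limits at `i∞` -/

lemma tendsto_atImInfty_of_hasSum_qExpansion {h : ℝ} (hh : 0 < h) {c : ℕ → ℂ} {f : ℍ → ℂ}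
    (hf : ∀ τ : ℍ, HasSum (fun m ↦ c m • qParam h τ ^ m) (f τ)) :
    Tendsto f atImInfty (𝓝 (c 0)) := by
  let g : ℍ → ℂ := fun τ ↦ (f τ - c 0) / qParam h τ
  have hg : IsBoundedAtImInfty g := by
    refine isBoundedAtImInfty_of_hasSum_qExpansion hh (c := fun m ↦ c (m + 1)) fun τ ↦ ?_
    have hq : qParam h τ ≠ 0 := qParam_ne_zero _
    convert! ((hasSum_nat_add_iff' 1).mpr (hf τ)).div_const (qParam h τ) using 1
    · ext m
      simp only [smul_eq_mul, pow_succ]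
      field_simp
    · simp [g]
  have hfg : f = fun τ : ℍ ↦ qParam h τ * g τ + c 0 := by
    ext τ
    have hq : qParam h τ ≠ 0 := qParam_ne_zero _
    simp only [g]
    field_simp
    ring
  rw [hfg]
  have hzero : IsZeroAtImInfty ((fun τ : ℍ ↦ qParam h τ) * g) :=
    ZeroAtFilter.mul_boundedAtFilter (qParam_tendsto_atImInfty hh) hg
  simpa using! hzero.add_const (c 0)

lemma norm_deriv_ofComplex_le {F : ℍ → ℂ} (hF : MDiff F) {A B : ℝ}
    (hB : ∀ z : ℍ, A ≤ z.im → ‖F z‖ ≤ B) {z : ℍ} (hz : 2 * A ≤ z.im) :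
    ‖deriv (F ∘ ofComplex) z‖ ≤ B / (z.im / 2) := by
  have hr : 0 < z.im / 2 := half_pos z.im_pos
  have him {w : ℂ} (hw : w ∈ Metric.closedBall (z : ℂ) (z.im / 2)) : z.im / 2 ≤ w.im := by
    have h := (abs_im_le_norm _).trans (mem_closedBall_iff_norm.mp hw)
    rw [abs_le, sub_im, coe_im] at h
    linarith [h.1]
  refine norm_deriv_le_of_forall_mem_sphere_norm_le hr
    (DifferentiableOn.diffContOnCl fun w hw ↦ ?_) fun w hw ↦ ?_
  · rw [closure_ball _ hr.ne'] at hw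
    exact ((UpperHalfPlane.mdifferentiable_iff.mp hF).differentiableAt
      (isOpen_upperHalfPlaneSet.mem_nhds (hr.trans_le (him hw)))).differentiableWithinAt
  · have hw' := him (Metric.sphere_subset_closedBall hw)
    rw [Function.comp_apply, ofComplex_apply_of_im_pos (hr.trans_le hw')]
    exact hB _ (by rw [← coe_im]; linarith)

lemma isZeroAtImInfty_normalizedDerivOfComplex {F : ℍ → ℂ} (hF : MDiff F)
    (hb : IsBoundedAtImInfty F) : IsZeroAtImInfty (D F) := by
  obtain ⟨B, A, hB⟩ := isBoundedAtImInfty_iff.mp hb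
  have him : Tendsto UpperHalfPlane.im atImInfty atTop := tendsto_comap
  have hderiv : Tendsto (fun z : ℍ ↦ deriv (F ∘ ofComplex) z) atImInfty (𝓝 0) :=
    squeeze_zero_norm'
      ((him.eventually_ge_atTop (2 * A)).mono fun z hz ↦ norm_deriv_ofComplex_le hF hB hz)
      ((him.atTop_div_const two_pos).const_div_atTop B)
  simpa only [mul_zero] using! hderiv.const_mul (2 * π * I : ℂ)⁻¹

lemma tendsto_E2_atImInfty : Tendsto E2 atImInfty (𝓝 1) :=
  tendsto_atImInfty_of_hasSum_qExpansion one_pos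
    (c := fun m ↦ if m = 0 then 1 else -24 * ArithmeticFunction.sigma 1 m) fun τ ↦ by
      simpa only [qParam, ofReal_one, div_one] using hasSum_qExpansion_E2 (z := τ)

lemma tendsto_serreDerivative_atImInfty {F : ℍ → ℂ} {l : ℂ} (k : ℂ) (hF : MDiff F)
    (hl : Tendsto F atImInfty (𝓝 l)) :
    Tendsto (serreDerivative k F) atImInfty (𝓝 (-(k * 12⁻¹ * l))) := by
  have hD : IsZeroAtImInfty (D F) :=
    isZeroAtImInfty_normalizedDerivOfComplex hF (hl.isBigO_one ℝ)
  simpa using! hD.sub ((tendsto_E2_atImInfty.const_mul (k * 12⁻¹)).mul hl)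

section NormalizedDerivative

lemma normalizedDerivOfComplex_comp_coe (f : ℂ → ℂ) (z : ℍ) :
    D (fun w : ℍ ↦ f w) z = (2 * π * I)⁻¹ * deriv f z := by
  rw [normalizedDerivOfComplex]
  congr 1
  refine Filter.EventuallyEq.deriv_eq ?_
  filter_upwards [isOpen_upperHalfPlaneSet.mem_nhds z.im_pos] with w hw
  rw [Function.comp_apply, ofComplex_apply_of_im_pos hw]

lemma mdifferentiable_comp_coe {f : ℂ → ℂ} (hf : ∀ z : ℍ, DifferentiableAt ℂ f z) :
    MDiff fun z : ℍ ↦ f z :=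
  fun z ↦ (hf z).mdifferentiableAt.comp z (UpperHalfPlane.mdifferentiable_coe z)

variable {F G : ℍ → ℂ} {z : ℍ}

lemma normalizedDerivOfComplex_div (hF : MDiff F) (hG : MDiff G) (hz : G z ≠ 0) :
    D (F / G) z = (D F z * G z - F z * D G z) / G z ^ 2 := by
  have h : deriv ((F / G) ∘ ofComplex) z =
      (deriv (F ∘ ofComplex) z * G z - F z * deriv (G ∘ ofComplex) z) / G z ^ 2 := by
    simpa only [Function.comp_apply, ofComplex_apply] using!
      deriv_div (UpperHalfPlane.mdifferentiableAt_iff.mp (hF z))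
        (UpperHalfPlane.mdifferentiableAt_iff.mp (hG z)) (by simpa using! hz)
  rw [normalizedDerivOfComplex, h, normalizedDerivOfComplex, normalizedDerivOfComplex]
  ring

lemma normalizedDerivOfComplex_div_eq_serreDerivative (k : ℂ) (hF : MDiff F) (hG : MDiff G)
    (hz : G z ≠ 0) :
    D (F / G) z = (serreDerivative k F z * G z - F z * serreDerivative k G z) / G z ^ 2 := by
  rw [normalizedDerivOfComplex_div hF hG hz, serreDerivative_apply, serreDerivative_apply]
  ring

lemma exists_eq_const_of_normalizedDerivOfComplex_eq_zero (hF : MDiff F) (h : D F = 0) :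
    ∃ c : ℂ, ∀ z, F z = c := by
  refine ⟨F UpperHalfPlane.I, fun z ↦ ?_⟩
  have hconst := isOpen_upperHalfPlaneSet.is_const_of_deriv_eq_zero
    (convex_halfSpace_im_gt 0).isPreconnected (UpperHalfPlane.mdifferentiable_iff.mp hF)
    (fun w hw ↦ ?_) z.im_pos UpperHalfPlane.I.im_pos
  · simpa only [Function.comp_apply, ofComplex_apply] using! hconst
  · simpa [normalizedDerivOfComplex] using congrFun h ⟨w, hw⟩

lemma exists_eq_smul_of_serreDerivative_eq_mul (k : ℂ) {φ : ℍ → ℂ} (hF : MDiff F) (hG : MDiff G)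
    (hG₀ : ∀ z, G z ≠ 0) (hFφ : serreDerivative k F = φ * F)
    (hGφ : serreDerivative k G = φ * G) : ∃ c : ℂ, F = c • G := by
  have hD : D (F / G) = 0 := by
    ext z
    rw [normalizedDerivOfComplex_div_eq_serreDerivative k hF hG (hG₀ z), hFφ, hGφ, Pi.mul_apply,
      Pi.mul_apply, Pi.zero_apply]
    ring
  have hFG : MDiff (F / G) := hF.div hG hG₀
  obtain ⟨c, hc⟩ := exists_eq_const_of_normalizedDerivOfComplex_eq_zero hFG hD
  exact ⟨c, funext fun z ↦ (div_eq_iff (hG₀ z)).mp (hc z)⟩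

end NormalizedDerivative

/-! ### Permuted families -/

lemma eq_zero_of_slash_S_of_slash_T {k : ℤ} (hk : k < 12) {F : ℍ → ℂ} (hF : MDiff F)
    (hS : F ∣[k] ModularGroup.S = F) (hT : F ∣[k] ModularGroup.T = F) (h0 : IsZeroAtImInfty F) :
    F = 0 := by
  have hinv := SlashInvariantForm.slash_action_generators_SL2Z hS hT
  let f : CuspForm 𝒮ℒ k :=
    { toFun := F
      slash_action_eq' := by
        rintro _ ⟨γ, rfl⟩
        exact hinv γ
      holo' := hF
      zero_at_cusps' := fun hc ↦ by
        rw [Subgroup.IsArithmetic.isCusp_iff_isCusp_SL2Z] at hc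
        rw [OnePoint.isZeroAt_iff_forall_SL2Z hc]
        intro γ _
        rwa [hinv] }
  have hf : f = 0 :=
    rank_zero_iff_forall_zero.mp (CuspForm.rank_eq_zero_of_weight_lt_twelve hk) f
  exact congrArg (fun g : CuspForm 𝒮ℒ k ↦ (g : ℍ → ℂ)) hf

lemma exists_eq_smul_of_mul_self_eq {F G : ℍ → ℂ} (hF : MDiff F) (hG : MDiff G) {a : ℂ}
    (h : F * F = a • (G * G)) : ∃ c : ℂ, F = c • G := by
  obtain ⟨c, rfl⟩ := IsAlgClosed.exists_eq_mul_self a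
  have hcG : MDiff (c • G) := hG.const_smul c
  have hprod : (F + c • G) * (F - c • G) = 0 := by
    rw [← mul_self_sub_mul_self, h, smul_mul_smul_comm, sub_self]
  rcases (UpperHalfPlane.mul_eq_zero_iff (hF.add hcG) (hF.sub hcG)).mp hprod with h₁ | h₁
  · exact ⟨-c, by rw [_root_.neg_smul, eq_neg_of_add_eq_zero_left h₁]⟩
  · exact ⟨c, sub_eq_zero.mp h₁⟩

lemma exists_sub_eq_smul_of_sum_eq_zero {f : Fin 3 → ℍ → ℂ} (hf : ∀ i, MDiff (f i))
    (hsum : ∑ i, f i = 0) (hsq : ∑ i, f i * f i = 0) : ∃ c : ℂ, f 1 - f 2 = c • f 0 := by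
  refine exists_eq_smul_of_mul_self_eq ((hf 1).sub (hf 2)) (hf 0) (a := -3) ?_
  rw [Fin.sum_univ_three] at hsum hsq
  ext z
  have h₁ := congrFun hsum z
  have h₂ := congrFun hsq z
  simp only [Pi.add_apply, Pi.mul_apply, Pi.sub_apply, Pi.smul_apply, Pi.zero_apply,
    smul_eq_mul] at h₁ h₂ ⊢
  linear_combination 2 * h₂ - (f 1 z + f 2 z - f 0 z) * h₁

/-- A family of holomorphic functions on `ℍ` which the weight `k` slash action permutes, the
generators `S` and `T` of `SL(2, ℤ)` acting on indices through `s` and `t`: the components of a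
vector-valued modular form for a permutation representation, without a growth condition. -/
structure SlashPermuted {ι : Type*} (s t : Equiv.Perm ι) (k : ℤ) (f : ι → ℍ → ℂ) : Prop where
  mdifferentiable (i : ι) : MDiff (f i)
  slash_S (i : ι) : f i ∣[k] ModularGroup.S = f (s i)
  slash_T (i : ι) : f i ∣[k] ModularGroup.T = f (t i)

namespace SlashPermuted

variable {ι : Type*} {s t : Equiv.Perm ι} {k l : ℤ} {f g : ι → ℍ → ℂ}

lemma add (hf : SlashPermuted s t k f) (hg : SlashPermuted s t k g) :
    SlashPermuted s t k (f + g) where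
  mdifferentiable i := (hf.mdifferentiable i).add (hg.mdifferentiable i)
  slash_S i := by simp only [Pi.add_apply, SlashAction.add_slash, hf.slash_S, hg.slash_S]
  slash_T i := by simp only [Pi.add_apply, SlashAction.add_slash, hf.slash_T, hg.slash_T]

lemma const_smul (hf : SlashPermuted s t k f) (c : ℂ) : SlashPermuted s t k (c • f) where
  mdifferentiable i := (hf.mdifferentiable i).const_smul c
  slash_S i := by simp only [Pi.smul_apply, ModularForm.SL_smul_slash, hf.slash_S]
  slash_T i := by simp only [Pi.smul_apply, ModularForm.SL_smul_slash, hf.slash_T]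

lemma mul (hf : SlashPermuted s t k f) (hg : SlashPermuted s t l g) :
    SlashPermuted s t (k + l) (f * g) where
  mdifferentiable i := (hf.mdifferentiable i).mul (hg.mdifferentiable i)
  slash_S i := by simp only [Pi.mul_apply, ModularForm.mul_slash_SL2, hf.slash_S, hg.slash_S]
  slash_T i := by simp only [Pi.mul_apply, ModularForm.mul_slash_SL2, hf.slash_T, hg.slash_T]

lemma serreDerivative (hf : SlashPermuted s t k f) :
    SlashPermuted s t (k + 2) fun i ↦ Derivative.serreDerivative k (f i) where
  mdifferentiable i := serreDerivative_mdifferentiable k (hf.mdifferentiable i)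
  slash_S i := by rw [serreDerivative_slash_equivariant (hf.mdifferentiable i), hf.slash_S]
  slash_T i := by rw [serreDerivative_slash_equivariant (hf.mdifferentiable i), hf.slash_T]

variable [Fintype ι]

lemma mdifferentiable_sum (hf : SlashPermuted s t k f) : MDiff (∑ i, f i) :=
  Finset.sum_induction _ (fun F : ℍ → ℂ ↦ MDiff F) (fun _ _ ↦ .add) mdifferentiable_const
    fun i _ ↦ hf.mdifferentiable i

lemma sum_slash_S (hf : SlashPermuted s t k f) : (∑ i, f i) ∣[k] ModularGroup.S = ∑ i, f i := by
  simp only [SlashAction.sum_slash, hf.slash_S, Equiv.sum_comp s f]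

lemma sum_slash_T (hf : SlashPermuted s t k f) : (∑ i, f i) ∣[k] ModularGroup.T = ∑ i, f i := by
  simp only [SlashAction.sum_slash, hf.slash_T, Equiv.sum_comp t f]

lemma const_sum (hf : SlashPermuted s t k f) : SlashPermuted s t k fun _ ↦ ∑ i, f i where
  mdifferentiable _ := hf.mdifferentiable_sum
  slash_S _ := hf.sum_slash_S
  slash_T _ := hf.sum_slash_T

lemma sum_eq_zero (hf : SlashPermuted s t k f) (hk : k < 12)
    (h0 : IsZeroAtImInfty (∑ i, f i)) : ∑ i, f i = 0 :=
  eq_zero_of_slash_S_of_slash_T hk hf.mdifferentiable_sum hf.sum_slash_S hf.sum_slash_T h0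

lemma eq_zero_of_swap {f : Fin 3 → ℍ → ℂ}
    (hf : SlashPermuted (Equiv.swap 0 1) (Equiv.swap 1 2) k f) (hk : k + k < 12)
    (h0 : ∀ i, IsZeroAtImInfty (f i)) : f = 0 := by
  have hsum : ∑ i, f i = 0 :=
    hf.sum_eq_zero (by lia) ((zeroAtImInftySubmodule ℂ).sum_mem fun i _ ↦ h0 i)
  have hsq : ∑ i, f i * f i = 0 :=
    (hf.mul hf).sum_eq_zero hk ((zeroAtImInftySubmodule ℂ).sum_mem fun i _ ↦
      (h0 i).mul_boundedAtFilter (h0 i).isBoundedAtImInfty)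
  obtain ⟨c, hc⟩ := exists_sub_eq_smul_of_sum_eq_zero hf.mdifferentiable hsum hsq
  have h₁₂ : f 1 = f 2 := by
    have hT₀ : f 0 ∣[k] ModularGroup.T = f 0 := hf.slash_T 0
    have hT₁ : f 1 ∣[k] ModularGroup.T = f 2 := hf.slash_T 1
    have hT₂ : f 2 ∣[k] ModularGroup.T = f 1 := hf.slash_T 2
    have h : (f 1 - f 2) ∣[k] ModularGroup.T = f 1 - f 2 := by
      rw [hc, ModularForm.SL_smul_slash, hT₀]
    rw [sub_eq_add_neg, SlashAction.add_slash, SlashAction.neg_slash, hT₁, hT₂] at h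
    refine sub_eq_zero.mp (self_eq_neg.mp (h.symm.trans ?_))
    abel
  have h₀₂ : f 0 = f 2 := by
    have hS₁ : f 1 ∣[k] ModularGroup.S = f 0 := hf.slash_S 1
    have hS₂ : f 2 ∣[k] ModularGroup.S = f 2 := hf.slash_S 2
    rw [← hS₁, h₁₂, hS₂]
  have h₂ : f 2 = 0 := by
    rw [Fin.sum_univ_three, h₀₂, h₁₂] at hsum
    ext z
    have h : f 2 z + f 2 z + f 2 z = 0 := congrFun hsum z
    rw [Pi.zero_apply]
    linear_combination (1 / 3) * h
  ext i : 1
  fin_cases i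
  exacts [h₀₂.trans h₂, h₁₂.trans h₂, h₂]

end SlashPermuted

/-! ### Half-period forms -/

lemma slash_apply_of_det_pos {k : ℤ} {g : GL (Fin 2) ℝ} (hg : 0 < g.det.val) (f : ℍ → ℂ) (z : ℍ) :
    (f ∣[k] g) z = f (g • z) * g.det.val ^ (k - 1) * denom g z ^ (-k) := by
  rw [ModularForm.slash_apply, UpperHalfPlane.σ, if_pos hg, abs_of_pos hg,
    ContinuousAlgEquiv.refl_apply]

lemma smul_slash_of_det_pos {k : ℤ} {g : GL (Fin 2) ℝ} (hg : 0 < g.det.val) (c : ℂ) (f : ℍ → ℂ) :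
    (c • f) ∣[k] g = c • f ∣[k] g := by
  rw [ModularForm.smul_slash, UpperHalfPlane.σ, if_pos hg, ContinuousAlgEquiv.refl_apply]

lemma D2_slash_of_mul_eq_mul {α β : GL (Fin 2) ℝ} {γ δ : SL(2, ℤ)} (hα : α 1 0 = 0)
    (hβ : β 1 0 = 0) (hdet : 0 < β.det.val) (h : α * γ = δ * β) :
    D2 δ ∣[(2 : ℤ)] β = D2 γ := by
  ext z
  have hβdet : β.det.val = β 0 0 * β 1 1 := by
    simp [Matrix.GeneralLinearGroup.val_det_apply, Matrix.det_fin_two, hβ]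
  have hentry : (α 1 1 : ℂ) * γ 1 0 = δ 1 0 * β 0 0 := by
    have h₁ := congrArg (fun g : GL (Fin 2) ℝ ↦ (g 1 0 : ℂ)) h
    simpa [Matrix.mul_apply, Fin.sum_univ_two, hα, hβ] using h₁
  have hdenom : (α 1 1 : ℂ) * denom γ z = denom δ ↑(β • z) * β 1 1 := by
    have h₁ := congrArg (fun g ↦ denom g z) h
    have hσ (w : ℂ) : UpperHalfPlane.σ β w = w := by
      rw [UpperHalfPlane.σ, if_pos hdet, ContinuousAlgEquiv.refl_apply]
    rw [denom_cocycle_σ, denom_cocycle_σ, hσ] at h₁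
    simpa [UpperHalfPlane.σ, denom, hα, hβ] using h₁
  have hδ : denom δ ↑(β • z) ≠ 0 := denom_ne_zero _ _
  have hγ : denom γ z ≠ 0 := denom_ne_zero _ _
  have hβ₁ : denom β z = β 1 1 := by simp [denom, hβ]
  rw [slash_apply_of_det_pos hdet, D2, D2, hβ₁, hβdet]
  have hβ₁₁ : (β 1 1 : ℂ) ≠ 0 := ofReal_ne_zero.mpr (right_ne_zero_of_mul (hβdet ▸ hdet.ne'))
  simp only [Int.reduceSub, zpow_neg, zpow_ofNat, ofReal_mul]
  field_simp
  linear_combination (γ 1 0 : ℂ) * hdenom - denom γ z * hentry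

/-- Representatives of the three classes of matrices of determinant `2` modulo `SL(2, ℤ)`, i.e. of
the three sublattices of index `2` in a lattice; they act on `ℍ` by `2z`, `z / 2`, `(z + 1) / 2`. -/
def heckeMatrix (i : Fin 3) : GL (Fin 2) ℝ :=
  Matrix.GeneralLinearGroup.mkOfDetNeZero
    (![!![2, 0; 0, 1], !![1, 0; 0, 2], !![1, 1; 0, 2]] i) (by fin_cases i <;> simp)

/-- The weight `2` forms `e₁, e₂, e₃` of level `2`, up to a common factor the values of the
Weierstrass `℘`-function at the half periods, written as the quasimodularity defects of `E2`. -/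
def halfPeriodForm (i : Fin 3) : ℍ → ℂ := E2 ∣[(2 : ℤ)] heckeMatrix i - E2

lemma heckeMatrix_one_zero (i : Fin 3) : heckeMatrix i 1 0 = 0 := by
  fin_cases i <;> simp [heckeMatrix]

lemma det_heckeMatrix (i : Fin 3) : (heckeMatrix i).det.val = 2 := by
  fin_cases i <;> simp [heckeMatrix]

lemma heckeMatrix_mul_S (i : Fin 3) :
    ∃ δ : SL(2, ℤ), heckeMatrix i * ModularGroup.S = δ * heckeMatrix (Equiv.swap 0 1 i) := by
  obtain ⟨δ, hδ⟩ : ∃ δ : SL(2, ℤ), δ.val = !![1, -1; 2, -1] := ⟨⟨_, by simp⟩, rfl⟩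
  refine ⟨![ModularGroup.S, ModularGroup.S, δ] i, ?_⟩
  ext a b
  fin_cases i <;> fin_cases a <;> fin_cases b <;>
    simp [heckeMatrix, hδ, ModularGroup.coe_S, Matrix.mul_apply, Fin.sum_univ_two,
      Equiv.swap_apply_def]
  norm_num

lemma heckeMatrix_mul_T (i : Fin 3) :
    ∃ δ : SL(2, ℤ), heckeMatrix i * ModularGroup.T = δ * heckeMatrix (Equiv.swap 1 2 i) := by
  refine ⟨![ModularGroup.T * ModularGroup.T, 1, ModularGroup.T] i, ?_⟩
  ext a b
  fin_cases i <;> fin_cases a <;> fin_cases b <;>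
    simp [heckeMatrix, ModularGroup.coe_T, Matrix.mul_apply, Fin.sum_univ_two,
      Equiv.swap_apply_def] <;> norm_num

lemma halfPeriodForm_slash {i j : Fin 3} {γ δ : SL(2, ℤ)}
    (h : heckeMatrix i * γ = δ * heckeMatrix j) :
    halfPeriodForm i ∣[(2 : ℤ)] γ = halfPeriodForm j := by
  have hD := D2_slash_of_mul_eq_mul (heckeMatrix_one_zero i) (heckeMatrix_one_zero j)
    (by rw [det_heckeMatrix]; exact two_pos) h
  have hE : E2 ∣[(2 : ℤ)] (δ * heckeMatrix j) =
      E2 ∣[(2 : ℤ)] heckeMatrix j - (1 / (2 * riemannZeta 2)) • D2 γ := by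
    rw [SlashAction.slash_mul, ← ModularForm.SL_slash, E2_slash_action, sub_eq_add_neg,
      SlashAction.add_slash, SlashAction.neg_slash, smul_slash_of_det_pos, hD, ← sub_eq_add_neg]
    rw [det_heckeMatrix]; exact two_pos
  rw [halfPeriodForm, halfPeriodForm, sub_eq_add_neg, SlashAction.add_slash, SlashAction.neg_slash,
    E2_slash_action, ModularForm.SL_slash, ← SlashAction.slash_mul, h, hE]
  abel

lemma slashPermuted_halfPeriodForm :
    SlashPermuted (Equiv.swap 0 1) (Equiv.swap 1 2) 2 halfPeriodForm where
  mdifferentiable i :=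
    (MDifferentiable.slash E2_mdifferentiable 2 (heckeMatrix i)).sub E2_mdifferentiable
  slash_S i := halfPeriodForm_slash (heckeMatrix_mul_S i).choose_spec
  slash_T i := halfPeriodForm_slash (heckeMatrix_mul_T i).choose_spec

lemma coe_heckeMatrix_smul (i : Fin 3) (z : ℍ) :
    (↑(heckeMatrix i • z) : ℂ) = ![2 * (z : ℂ), z / 2, (z + 1) / 2] i := by
  rw [coe_smul_of_det_pos (by rw [det_heckeMatrix]; exact two_pos)]
  fin_cases i <;> simp [heckeMatrix, num, denom]

lemma halfPeriodForm_apply (i : Fin 3) (z : ℍ) :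
    halfPeriodForm i z = ![2, 1 / 2, 1 / 2] i * E2 (heckeMatrix i • z) - E2 z := by
  rw [halfPeriodForm, Pi.sub_apply, slash_apply_of_det_pos (by rw [det_heckeMatrix]; exact two_pos),
    det_heckeMatrix]
  fin_cases i <;> simp [heckeMatrix, denom] <;> ring

lemma tendsto_halfPeriodForm_atImInfty (i : Fin 3) :
    Tendsto (halfPeriodForm i) atImInfty (𝓝 (![1, -1 / 2, -1 / 2] i)) := by
  have hE := tendsto_E2_atImInfty.comp (tendsto_smul_atImInfty (heckeMatrix_one_zero i))
  have h := (hE.const_mul (![2, 1 / 2, 1 / 2] i)).sub tendsto_E2_atImInfty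
  convert! h using 2
  · exact halfPeriodForm_apply i _
  · fin_cases i <;> norm_num

lemma sum_halfPeriodForm : ∑ i, halfPeriodForm i = 0 := by
  refine slashPermuted_halfPeriodForm.sum_eq_zero (by norm_num) ?_
  have hlim : ∑ i, (![1, -1 / 2, -1 / 2] : Fin 3 → ℂ) i = 0 := by norm_num [Fin.sum_univ_succ]
  have h := tendsto_finsetSum Finset.univ fun i _ ↦ tendsto_halfPeriodForm_atImInfty i
  rw [hlim] at h
  exact h.congr fun z ↦ (Finset.sum_apply z _ _).symm

/- The difference of the two sides is again permuted by `SL(2, ℤ)`, and the coefficients `1 / 3` and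
`1 / 9` are those for which it vanishes at `i∞`. -/
lemma serreDerivative_halfPeriodForm (i : Fin 3) (z : ℍ) :
    serreDerivative 2 (halfPeriodForm i) z =
      -(1 / 3) * halfPeriodForm i z ^ 2 + 1 / 9 * ∑ j, halfPeriodForm j z ^ 2 := by
  have he := slashPermuted_halfPeriodForm
  have hdefect := (he.serreDerivative.add ((he.mul he).const_smul (1 / 3))).add
    ((he.mul he).const_sum.const_smul (-(1 / 9)))
  have hz := congrFun (congrFun (hdefect.eq_zero_of_swap (by norm_num) fun i ↦ ?_) i) z
  · simp only [Pi.add_apply, Pi.smul_apply, Pi.mul_apply, Finset.sum_apply, Pi.zero_apply,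
      smul_eq_mul, Int.cast_ofNat] at hz
    simp only [pow_two]
    linear_combination hz
  · let l : Fin 3 → ℂ := ![1, -1 / 2, -1 / 2]
    have hl : ∀ j, Tendsto (halfPeriodForm j) atImInfty (𝓝 (l j)) :=
      tendsto_halfPeriodForm_atImInfty
    have hlim : -(2 * 12⁻¹ * l i) + 1 / 3 * (l i * l i) + -(1 / 9) * ∑ j, l j * l j = 0 := by
      fin_cases i <;> norm_num [l, Fin.sum_univ_succ]
    have hsq := tendsto_finsetSum Finset.univ fun j _ ↦ (hl j).mul (hl j)
    have h := ((tendsto_serreDerivative_atImInfty 2 (he.mdifferentiable i) (hl i)).add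
      (((hl i).mul (hl i)).const_mul (1 / 3))).add (hsq.const_mul (-(1 / 9)))
    rw [hlim] at h
    exact h.congr fun z ↦ by simp

/-- The form `(e₃ - e₂) / 24` of weight `2`; at `2τ` its value is the odd part `E_odd(τ)` of the
Eisenstein series of weight `2`. -/
def oddEisenstein : ℍ → ℂ := (1 / 24 : ℂ) • (halfPeriodForm 2 - halfPeriodForm 1)

lemma mdifferentiable_halfPeriodForm (i : Fin 3) : MDiff (halfPeriodForm i) :=
  slashPermuted_halfPeriodForm.mdifferentiable i

lemma mdifferentiable_oddEisenstein : MDiff oddEisenstein :=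
  ((mdifferentiable_halfPeriodForm 2).sub (mdifferentiable_halfPeriodForm 1)).const_smul _

lemma oddEisenstein_apply (z : ℍ) :
    oddEisenstein z = 1 / 24 * (halfPeriodForm 2 z - halfPeriodForm 1 z) := rfl

lemma sum_halfPeriodForm_apply (z : ℍ) :
    halfPeriodForm 0 z + halfPeriodForm 1 z + halfPeriodForm 2 z = 0 := by
  simpa only [Fin.sum_univ_three] using! congrFun sum_halfPeriodForm z

lemma serreDerivative_halfPeriodForm_zero (z : ℍ) :
    serreDerivative 2 (halfPeriodForm 0) z =
      -(1 / 6) * halfPeriodForm 0 z ^ 2 + 32 * oddEisenstein z ^ 2 := by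
  rw [serreDerivative_halfPeriodForm, oddEisenstein_apply, Fin.sum_univ_three]
  linear_combination (1 / 18) * (halfPeriodForm 1 z + halfPeriodForm 2 z - halfPeriodForm 0 z) *
    sum_halfPeriodForm_apply z

lemma serreDerivative_oddEisenstein :
    serreDerivative 2 oddEisenstein = (1 / 3 : ℂ) • halfPeriodForm 0 * oddEisenstein := by
  ext z
  have h : serreDerivative 2 oddEisenstein z = 1 / 24 *
      (serreDerivative 2 (halfPeriodForm 2) z - serreDerivative 2 (halfPeriodForm 1) z) := by
    rw [oddEisenstein, serreDerivative_smul, serreDerivative_sub]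
    · rfl
    · exact mdifferentiable_halfPeriodForm 2
    · exact mdifferentiable_halfPeriodForm 1
    · exact (mdifferentiable_halfPeriodForm 2).sub (mdifferentiable_halfPeriodForm 1)
  rw [h, serreDerivative_halfPeriodForm, serreDerivative_halfPeriodForm]
  simp only [Pi.mul_apply, Pi.smul_apply, smul_eq_mul, oddEisenstein_apply]
  linear_combination -(1 / 72) * (halfPeriodForm 2 z - halfPeriodForm 1 z) *
    sum_halfPeriodForm_apply z

lemma normalizedDerivOfComplex_halfPeriodForm_div_oddEisenstein {z : ℍ} (hz : oddEisenstein z ≠ 0) :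
    D (halfPeriodForm 0 / oddEisenstein) z =
      -(1 / 2) * oddEisenstein z * ((halfPeriodForm 0 z / oddEisenstein z) ^ 2 - 64) := by
  rw [normalizedDerivOfComplex_div_eq_serreDerivative 2 (mdifferentiable_halfPeriodForm 0)
    mdifferentiable_oddEisenstein hz, serreDerivative_halfPeriodForm_zero,
    serreDerivative_oddEisenstein]
  simp only [Pi.mul_apply, Pi.smul_apply, smul_eq_mul]
  field_simp
  ring

/-! ### Expansions in powers of `q` -/

lemma nome_eq_qParam (w : ℂ) : nome w = qParam 1 w := by simp [nome, qParam]

lemma nome_natCast_mul (n : ℕ) (w : ℂ) : nome (n * w) = nome w ^ n := by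
  rw [nome, nome, ← Complex.exp_nat_mul]
  ring_nf

lemma nome_add_half (w : ℂ) : nome (w + 1 / 2) = -nome w := by
  rw [nome, nome, show 2 * (π : ℂ) * I * (w + 1 / 2) = 2 * π * I * w + π * I by ring,
    Complex.exp_add, Complex.exp_pi_mul_I, mul_neg_one]

lemma nome_ne_zero (w : ℂ) : nome w ≠ 0 := Complex.exp_ne_zero _

lemma tendsto_nome_atImInfty : Tendsto (fun z : ℍ ↦ nome z) atImInfty (𝓝 0) := by
  simpa only [nome_eq_qParam] using qParam_tendsto_atImInfty one_pos

lemma hasSum_E2 (z : ℍ) :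
    HasSum (fun m ↦ (if m = 0 then 1 else -24 * (ArithmeticFunction.sigma 1 m : ℂ)) * nome z ^ m)
      (E2 z) := by
  simpa only [nome, smul_eq_mul] using hasSum_qExpansion_E2 (z := z)

lemma hasSum_odd_of_hasSum_neg {c : ℕ → ℂ} {x a b : ℂ} (ha : HasSum (fun m ↦ c m * x ^ m) a)
    (hb : HasSum (fun m ↦ c m * (-x) ^ m) b) :
    HasSum (fun m ↦ c (2 * m + 1) * x ^ (2 * m + 1)) ((a - b) / 2) := by
  have hinj : Function.Injective fun m : ℕ ↦ 2 * m + 1 := fun m n h ↦ by simpa using h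
  have h := (ha.sub hb).div_const 2
  rw [← hinj.hasSum_iff] at h
  · refine h.congr_fun fun m ↦ ?_
    rw [Function.comp_apply, (odd_two_mul_add_one m).neg_pow]
    ring
  · intro m hm
    have hm' : Even m := Nat.not_odd_iff_even.mp fun ⟨n, hn⟩ ↦ hm ⟨n, hn.symm⟩
    rw [hm'.neg_pow, sub_self, zero_div]

lemma hasSum_oddEisenstein (z : ℍ) :
    HasSum (fun m ↦ (ArithmeticFunction.sigma 1 (2 * m + 1) : ℂ) * nome (z / 2) ^ (2 * m + 1))
      (oddEisenstein z) := by
  have h₁ := hasSum_E2 (heckeMatrix 1 • z)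
  have h₂ := hasSum_E2 (heckeMatrix 2 • z)
  have hnome₁ : nome ↑(heckeMatrix 1 • z) = nome (z / 2) := by rw [coe_heckeMatrix_smul]; rfl
  have hnome₂ : nome ↑(heckeMatrix 2 • z) = -nome (z / 2) := by
    rw [coe_heckeMatrix_smul, ← nome_add_half, ← add_div]
    rfl
  rw [hnome₁] at h₁
  rw [hnome₂] at h₂
  convert! (hasSum_odd_of_hasSum_neg h₁ h₂).mul_left (-1 / 24) using 1
  · ext m
    rw [if_neg (Nat.succ_ne_zero _)]
    ring
  · rw [oddEisenstein_apply, halfPeriodForm_apply, halfPeriodForm_apply,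
      show (![2, 1 / 2, 1 / 2] : Fin 3 → ℂ) 1 = 1 / 2 from rfl,
      show (![2, 1 / 2, 1 / 2] : Fin 3 → ℂ) 2 = 1 / 2 from rfl]
    ring

lemma tendsto_oddEisenstein_div_nome :
    Tendsto (fun z : ℍ ↦ oddEisenstein z / nome (z / 2)) atImInfty (𝓝 1) := by
  have h := tendsto_atImInfty_of_hasSum_qExpansion one_pos
    (c := fun m ↦ (ArithmeticFunction.sigma 1 (2 * m + 1) : ℂ))
    (f := fun z ↦ oddEisenstein z / nome (z / 2)) fun z ↦ ?_
  · simpa using h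
  · refine ((hasSum_oddEisenstein z).div_const (nome (z / 2))).congr_fun fun m ↦ ?_
    have hq : qParam 1 z = nome (z / 2) ^ 2 := by
      rw [← nome_eq_qParam, ← nome_natCast_mul]
      congr 1
      push_cast
      ring
    rw [hq, smul_eq_mul, eq_div_iff (nome_ne_zero _)]
    ring

lemma sigmaOdd_of_odd {n : ℕ} (hn : Odd n) : sigmaOdd n = ArithmeticFunction.sigma 1 n := by
  rw [sigmaOdd, ArithmeticFunction.sigma_one_apply, Finset.filter_true_of_mem]
  exact fun d hd ↦ hn.of_dvd_nat (Nat.dvd_of_mem_divisors hd)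

lemma sigma_one_two_mul (m : ℕ) :
    ArithmeticFunction.sigma 1 (2 * m) = sigmaOdd (2 * m) + 2 * ArithmeticFunction.sigma 1 m := by
  have heven : (2 * m).divisors.filter (fun d ↦ ¬Odd d) = m.divisors.image (2 * ·) := by
    ext d
    simp only [Finset.mem_filter, Nat.mem_divisors, Nat.not_odd_iff_even, Finset.mem_image]
    constructor
    · rintro ⟨⟨hd, hm⟩, hev⟩
      obtain ⟨c, rfl⟩ := hev.two_dvd
      exact ⟨c, ⟨Nat.dvd_of_mul_dvd_mul_left two_pos hd, by lia⟩, rfl⟩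
    · rintro ⟨c, ⟨hc, hm⟩, rfl⟩
      exact ⟨⟨Nat.mul_dvd_mul_left 2 hc, by lia⟩, even_two_mul c⟩
  rw [ArithmeticFunction.sigma_one_apply, ArithmeticFunction.sigma_one_apply, sigmaOdd,
    ← Finset.sum_filter_add_sum_filter_not (2 * m).divisors Odd, heven, Finset.mul_sum,
    Finset.sum_image fun a _ b _ h ↦ Nat.eq_of_mul_eq_mul_left two_pos h]

lemma exists_hasSum_even_hasSum_odd {f : ℕ → ℂ} {s : ℂ} (hf : HasSum f s) :
    ∃ a b, HasSum (fun m ↦ f (2 * m)) a ∧ HasSum (fun m ↦ f (2 * m + 1)) b ∧ s = a + b := by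
  obtain ⟨a, ha⟩ := hf.summable.comp_injective (i := (2 * ·)) fun m n h ↦ by simpa using h
  obtain ⟨b, hb⟩ := hf.summable.comp_injective (i := (2 * · + 1)) fun m n h ↦ by simpa using h
  exact ⟨a, b, ha, hb, hf.unique (ha.even_add_odd hb)⟩

lemma hasSum_halfPeriodForm_zero (z : ℍ) :
    HasSum (fun m ↦ (if m = 0 then 1 else 24 * (sigmaOdd m : ℂ)) * nome z ^ m)
      (halfPeriodForm 0 z) := by
  have hE := (hasSum_E2 (heckeMatrix 0 • z)).mul_left 2
  have hnome : nome ↑(heckeMatrix 0 • z) = nome z ^ 2 := by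
    rw [coe_heckeMatrix_smul, ← nome_natCast_mul]
    rfl
  obtain ⟨a, b, ha, hb, hab⟩ := exists_hasSum_even_hasSum_odd (hasSum_E2 z)
  have hval : halfPeriodForm 0 z = (2 * E2 (heckeMatrix 0 • z) - a) + -b := by
    have he : halfPeriodForm 0 z = 2 * E2 (heckeMatrix 0 • z) - E2 z := halfPeriodForm_apply 0 z
    rw [he, hab]
    ring
  let c (m : ℕ) : ℂ := if m = 0 then 1 else 24 * (sigmaOdd m : ℂ)
  have heven : HasSum (fun m ↦ c (2 * m) * nome z ^ (2 * m)) (2 * E2 (heckeMatrix 0 • z) - a) := by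
    refine (hE.sub ha).congr_fun fun m ↦ ?_
    have hσ := congrArg (Nat.cast : ℕ → ℂ) (sigma_one_two_mul m)
    push_cast at hσ
    rcases eq_or_ne m 0 with rfl | hm
    · norm_num [c]
    · simp only [c, mul_eq_zero, OfNat.ofNat_ne_zero, hm, or_self, if_false,
        hnome, ← pow_mul]
      linear_combination -24 * nome z ^ (2 * m) * hσ
  have hodd : HasSum (fun m ↦ c (2 * m + 1) * nome z ^ (2 * m + 1)) (-b) := by
    refine hb.neg.congr_fun fun m ↦ ?_
    simp [c, sigmaOdd_of_odd (odd_two_mul_add_one m)]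
  rw [hval]
  exact heven.even_add_odd hodd

lemma Estar_eq_halfPeriodForm_zero (z : ℍ) : Estar z = halfPeriodForm 0 z := by
  have h := (hasSum_nat_add_iff' 1).mpr (hasSum_halfPeriodForm_zero z)
  simp only [Finset.sum_range_one, if_true, pow_zero, mul_one, Nat.add_eq_zero_iff, one_ne_zero,
    and_false, if_false, mul_assoc] at h
  rw [Estar, ← tsum_mul_left, h.tsum_eq, add_sub_cancel]

/-! ### The eta quotient -/

lemma dedekindEta_eq_eta : dedekindEta = ModularForm.eta := by
  funext w
  rw [dedekindEta, ModularForm.eta]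
  congr 1
  · rw [qParam]
    push_cast
    ring_nf
  · simp only [ModularForm.eta_q_eq_pow, nome]

lemma dedekindEta_ne_zero (z : ℍ) : dedekindEta z ≠ 0 := by
  rw [dedekindEta_eq_eta]
  exact ModularForm.eta_ne_zero z.im_pos

lemma differentiableAt_dedekindEta (z : ℍ) : DifferentiableAt ℂ dedekindEta z := by
  rw [dedekindEta_eq_eta]
  exact ModularForm.differentiableAt_eta_of_mem_upperHalfPlaneSet z.im_pos

lemma logDeriv_dedekindEta (z : ℍ) : logDeriv dedekindEta z = π * I / 12 * E2 z := by
  rw [dedekindEta_eq_eta]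
  exact ModularForm.logDeriv_eta_eq_E2 z

lemma tendsto_dedekindEta_div_exp :
    Tendsto (fun z : ℍ ↦ dedekindEta z / cexp (π * I * z / 12)) atImInfty (𝓝 1) := by
  have hφ : Tendsto (fun q : ℂ ↦ ∏' n : ℕ, (1 - q ^ (n + 1))) (𝓝 0) (𝓝 1) := by
    simpa using (ModularForm.differentiableOn_tprod_one_sub_pow.differentiableAt
      (Metric.ball_mem_nhds 0 one_pos)).continuousAt.tendsto
  refine (hφ.comp tendsto_nome_atImInfty).congr fun z ↦ ?_
  rw [dedekindEta, mul_div_cancel_left₀ _ (Complex.exp_ne_zero _), Function.comp_apply]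

/-- The eta quotient `η(2τ)⁸ / η(τ)⁴`; at `2τ` it is the reciprocal of the first factor of
`hfun`. -/
def etaQuotient (w : ℂ) : ℂ := dedekindEta (2 * w) ^ 8 / dedekindEta w ^ 4

lemma coe_heckeMatrix_zero_smul (z : ℍ) : (↑(heckeMatrix 0 • z) : ℂ) = 2 * z :=
  coe_heckeMatrix_smul 0 z

lemma dedekindEta_two_mul_ne_zero (z : ℍ) : dedekindEta (2 * z) ≠ 0 := by
  rw [← coe_heckeMatrix_zero_smul]
  exact dedekindEta_ne_zero _

lemma differentiableAt_dedekindEta_two_mul (z : ℍ) :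
    DifferentiableAt ℂ (fun w ↦ dedekindEta (2 * w)) z := by
  have h := differentiableAt_dedekindEta (heckeMatrix 0 • z)
  rw [coe_heckeMatrix_zero_smul] at h
  exact h.comp (z : ℂ) (differentiableAt_id.const_mul 2)

lemma logDeriv_dedekindEta_two_mul (z : ℍ) :
    logDeriv (fun w ↦ dedekindEta (2 * w)) z = π * I / 6 * E2 (heckeMatrix 0 • z) := by
  have h := differentiableAt_dedekindEta (heckeMatrix 0 • z)
  have hlog := logDeriv_dedekindEta (heckeMatrix 0 • z)
  rw [coe_heckeMatrix_zero_smul] at h hlog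
  have hcomp := logDeriv_comp h (differentiableAt_id.const_mul (2 : ℂ) (x := (z : ℂ)))
  rw [show logDeriv (fun w ↦ dedekindEta (2 * w)) z = _ from hcomp, hlog,
    show deriv (fun w : ℂ ↦ 2 * w) z = 2 by simp]
  ring

lemma etaQuotient_ne_zero (z : ℍ) : etaQuotient z ≠ 0 :=
  div_ne_zero (pow_ne_zero 8 (dedekindEta_two_mul_ne_zero z))
    (pow_ne_zero 4 (dedekindEta_ne_zero z))

lemma differentiableAt_etaQuotient (z : ℍ) : DifferentiableAt ℂ etaQuotient z :=
  ((differentiableAt_dedekindEta_two_mul z).fun_pow 8).fun_div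
    ((differentiableAt_dedekindEta z).fun_pow 4) (pow_ne_zero 4 (dedekindEta_ne_zero z))

lemma logDeriv_etaQuotient (z : ℍ) :
    logDeriv etaQuotient z = 2 * π * I * (1 / 6 * E2 z + 1 / 3 * halfPeriodForm 0 z) := by
  have h₁ := differentiableAt_dedekindEta z
  have h₂ := differentiableAt_dedekindEta_two_mul z
  have h : logDeriv etaQuotient z = _ := logDeriv_div (z : ℂ)
    (pow_ne_zero 8 (dedekindEta_two_mul_ne_zero z)) (pow_ne_zero 4 (dedekindEta_ne_zero z))
    (h₂.fun_pow 8) (h₁.fun_pow 4)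
  rw [h, logDeriv_fun_pow h₂, logDeriv_fun_pow h₁, logDeriv_dedekindEta_two_mul,
    logDeriv_dedekindEta, halfPeriodForm_apply,
    Matrix.cons_val_zero]
  push_cast
  ring

lemma serreDerivative_etaQuotient :
    serreDerivative 2 (fun z : ℍ ↦ etaQuotient z) =
      ((1 / 3 : ℂ) • halfPeriodForm 0) * fun z : ℍ ↦ etaQuotient z := by
  ext z
  have h := logDeriv_etaQuotient z
  rw [logDeriv_apply, div_eq_iff (etaQuotient_ne_zero z)] at h
  rw [serreDerivative_apply, normalizedDerivOfComplex_comp_coe, h, mul_assoc (2 * π * I : ℂ),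
    inv_mul_cancel_left₀ two_pi_I_ne_zero]
  simp only [Pi.mul_apply, Pi.smul_apply, smul_eq_mul]
  ring

lemma tendsto_etaQuotient_div_nome :
    Tendsto (fun z : ℍ ↦ etaQuotient z / nome (z / 2)) atImInfty (𝓝 1) := by
  have h₂ : Tendsto (fun z : ℍ ↦ dedekindEta (2 * z) / cexp (π * I * (2 * z) / 12)) atImInfty
      (𝓝 1) := by
    simpa only [Function.comp_def, coe_heckeMatrix_zero_smul] using
      tendsto_dedekindEta_div_exp.comp (tendsto_smul_atImInfty (heckeMatrix_one_zero 0))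
  have h := (h₂.pow 8).div (tendsto_dedekindEta_div_exp.pow 4) (pow_ne_zero 4 one_ne_zero)
  rw [one_pow, one_pow, div_one] at h
  refine h.congr fun z ↦ ?_
  have he (w : ℂ) : cexp (π * I * (2 * w) / 12) ^ 8 / cexp (π * I * w / 12) ^ 4 = nome (w / 2) := by
    rw [nome, ← Complex.exp_nat_mul, ← Complex.exp_nat_mul, ← Complex.exp_sub]
    push_cast
    ring_nf
  rw [Pi.div_apply, etaQuotient, ← he, div_pow, div_pow, div_div_div_comm]

lemma oddEisenstein_eq_etaQuotient (z : ℍ) : oddEisenstein z = etaQuotient z := by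
  obtain ⟨c, hc⟩ := exists_eq_smul_of_serreDerivative_eq_mul 2 mdifferentiable_oddEisenstein
    (mdifferentiable_comp_coe differentiableAt_etaQuotient) etaQuotient_ne_zero
    serreDerivative_oddEisenstein serreDerivative_etaQuotient
  have hlim := tendsto_etaQuotient_div_nome.const_mul c
  have hc₁ : c = 1 := by
    simpa using tendsto_nhds_unique (hlim.congr fun z ↦ by rw [hc]; simp [mul_div_assoc])
      tendsto_oddEisenstein_div_nome
  rw [hc, hc₁, one_smul]

lemma oddEisenstein_ne_zero (z : ℍ) : oddEisenstein z ≠ 0 := by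
  rw [oddEisenstein_eq_etaQuotient]
  exact etaQuotient_ne_zero z

section Duplication

variable {w : ℂ} {z : ℍ}

lemma Eodd_eq_oddEisenstein (hz : z = 2 * w) : Eodd w = oddEisenstein z := by
  rw [show w = z / 2 by rw [hz, mul_div_cancel_left₀ w two_ne_zero]]
  simpa only [Eodd, ArithmeticFunction.sigma_one_apply] using (hasSum_oddEisenstein z).tsum_eq

lemma hfun_eq_div (hz : z = 2 * w) : hfun w = halfPeriodForm 0 z / oddEisenstein z := by
  rw [oddEisenstein_eq_etaQuotient, ← Estar_eq_halfPeriodForm_zero, etaQuotient, hz, hfun,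
    ← mul_assoc, div_div_eq_mul_div, div_mul_eq_mul_div, mul_comm (_ ^ 4)]
  norm_num

lemma deriv_hfun (hz : z = 2 * w) :
    deriv hfun w = 2 * deriv ((halfPeriodForm 0 / oddEisenstein) ∘ ofComplex) z := by
  have him {v : ℂ} (hv : 0 < v.im) : 0 < (2 * v).im := by simpa using hv
  have hw : 0 < w.im := by
    have h : 0 < (z : ℂ).im := z.im_pos
    simpa [hz] using h
  have h : hfun =ᶠ[𝓝 w] fun v ↦ ((halfPeriodForm 0 / oddEisenstein) ∘ ofComplex) (2 * v) := by
    filter_upwards [isOpen_upperHalfPlaneSet.mem_nhds hw] with v hv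
    rw [Function.comp_apply, ofComplex_apply_of_im_pos (him hv)]
    exact hfun_eq_div rfl
  rw [h.deriv_eq, deriv_comp_mul_left, smul_eq_mul, hz]

end Duplication

/-- For `τ ∈ ℍ`: `(q d/dq) h(τ) = −E_odd(τ)(h(τ)² − 64)`, with `q d/dq = (2πi)⁻¹ d/dτ`. -/
theorem stmt13 (τ : ℂ) (hτ : 0 < τ.im) :
    (1 / (2 * (π : ℂ) * I)) * deriv hfun τ = -Eodd τ * (hfun τ ^ 2 - 64) := by
  let z : ℍ := ⟨2 * τ, by simpa using hτ⟩
  have hz : (z : ℂ) = 2 * τ := rfl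
  have hD := normalizedDerivOfComplex_halfPeriodForm_div_oddEisenstein (oddEisenstein_ne_zero z)
  rw [normalizedDerivOfComplex] at hD
  rw [one_div, deriv_hfun hz, Eodd_eq_oddEisenstein hz, hfun_eq_div hz]
  linear_combination 2 * hD
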